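/- Let γ ∈ ℝ be a finite corner of the min-plus characteristic polynomial P_A, and let a^{(γ)} = a_0^{G_0} + X a_1^{G_1} + ⋯ + X^d a_d^{G_d} be the auxiliary pencil built with the graphs G_k = Opt_k(γ). If the polynomial det(a^{(γ)}) ∈ ℂ[X] has nonzero roots λ_1, …, λ_m, listed with multiplicity, then there exist ε₀ > 0 and functions L_1, …, L_m : (0, ε₀) → ℂ such that for every ε ∈ (0, ε₀) the multiset {L_1(ε), …, L_m(ε)} is a sub-multiset of the multiset of roots of det(𝒜_ε) (counted with multiplicity), and ε^{−γ} L_i(ε) → λ_i as ε → 0⁺ for every i = 1, …, m; in other words, the pencil 𝒜_ε has m eigenvalues with respective asymptotic equivalents λ_i ε^γ. -/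

import Mathlib

open Polynomial Filter Topology Finset

noncomputable section

/-- The min-plus semiring `ℝ ∪ {+∞}`, with `min` as addition and `+` as
multiplication (so `⊤ = +∞` is the min-plus zero `𝟘`). -/
abbrev Rmin := WithTop ℝ

/-- Min-plus permanent of a matrix: `perm B = min_σ Σ_i B_{i σ(i)}`. -/
def mpPerm {n : ℕ} (B : Matrix (Fin n) (Fin n) Rmin) : Rmin :=
  Finset.univ.inf fun σ : Equiv.Perm (Fin n) => ∑ i, B i (σ i)

/-- Coefficient of `X^m` in the min-plus characteristic polynomial
`P_A = perm (A_0 ⊕ X A_1 ⊕ ⋯ ⊕ X^d A_d)`: expanding the min-plus permanent of the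
pencil, the coefficient of `X^m` is the min over permutations `σ` and over
exponent choices `κ : Fin n → Fin (d+1)` with `Σ_i κ i = m` of `Σ_i (A_{κ i})_{i σ(i)}`. -/
def PAcoeff {n d : ℕ} (A : Fin (d + 1) → Matrix (Fin n) (Fin n) Rmin) (m : ℕ) : Rmin :=
  Finset.univ.inf fun σ : Equiv.Perm (Fin n) =>
    (Finset.univ.filter fun κ : Fin n → Fin (d + 1) => ∑ i, (κ i : ℕ) = m).inf
      fun κ => ∑ i, A (κ i) i (σ i)

/-- The polynomial function `P̂_A(γ) = min_m (P_m + m γ)` associated with the formal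
min-plus characteristic polynomial `P_A` (whose degree is at most `n * d`). -/
def PAhat {n d : ℕ} (A : Fin (d + 1) → Matrix (Fin n) (Fin n) Rmin) (γ : ℝ) : Rmin :=
  (Finset.range (n * d + 1)).inf fun m => PAcoeff A m + (((m : ℝ) * γ : ℝ) : Rmin)

/-- The set of exponents `m` achieving the minimum in `P̂_A(γ)` with a finite
coefficient (the "active" slopes of the concave piecewise linear function `P̂_A` at `γ`). -/
def activeSet {n d : ℕ} (A : Fin (d + 1) → Matrix (Fin n) (Fin n) Rmin) (γ : ℝ) : Finset ℕ :=
  (Finset.range (n * d + 1)).filter fun m =>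
    PAcoeff A m ≠ ⊤ ∧ PAcoeff A m + (((m : ℝ) * γ : ℝ) : Rmin) = PAhat A γ

/-- `γ ∈ ℝ` is a finite corner of `P_A` iff the piecewise linear concave function `P̂_A`
is not differentiable at `γ`, i.e. at least two distinct slopes are active at `γ`. -/
def IsFiniteCorner {n d : ℕ} (A : Fin (d + 1) → Matrix (Fin n) (Fin n) Rmin) (γ : ℝ) : Prop :=
  ∃ m₁ ∈ activeSet A γ, ∃ m₂ ∈ activeSet A γ, m₁ ≠ m₂

/-- Multiplicity of a finite corner `γ`: `P̂_A'(γ⁻) - P̂_A'(γ⁺)`, i.e. the largest active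
slope minus the smallest active slope at `γ`. -/
def cornerMult {n d : ℕ} (A : Fin (d + 1) → Matrix (Fin n) (Fin n) Rmin) (γ : ℝ) : ℕ :=
  (activeSet A γ).sup id - ((activeSet A γ).min).getD 0

/-- Valuation of `P_A`: smallest `k` whose coefficient is `≠ 𝟘`; this is the
multiplicity of the corner `𝟘 = +∞`. -/
def PAval {n d : ℕ} (A : Fin (d + 1) → Matrix (Fin n) (Fin n) Rmin) : ℕ :=
  sInf {m | PAcoeff A m ≠ ⊤}

/-- Degree of `P_A`: largest `k` whose coefficient is `≠ 𝟘`. -/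
def PAdeg {n d : ℕ} (A : Fin (d + 1) → Matrix (Fin n) (Fin n) Rmin) : ℕ :=
  sSup {m | PAcoeff A m ≠ ⊤}

/-- The matrix `Â(γ)`, with entries `Â_{ij}(γ) = min_{0 ≤ k ≤ d} ((A_k)_{ij} + k γ)`. -/
def AhatMat {n d : ℕ} (A : Fin (d + 1) → Matrix (Fin n) (Fin n) Rmin) (γ : ℝ) :
    Matrix (Fin n) (Fin n) Rmin :=
  fun i j => Finset.univ.inf fun k : Fin (d + 1) => A k i j + ((((k : ℕ) : ℝ) * γ : ℝ) : Rmin)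

/-- `(i,j)` is an arc of the digraph `Opt(B)` of arcs belonging to optimal assignments. -/
def OptArc {n : ℕ} (B : Matrix (Fin n) (Fin n) Rmin) (i j : Fin n) : Prop :=
  ∃ σ : Equiv.Perm (Fin n), σ i = j ∧ (∑ l, B l (σ l)) = mpPerm B

/-- `(i,j)` is an arc of the digraph `Opt_k(γ)`. -/
def OptK {n d : ℕ} (A : Fin (d + 1) → Matrix (Fin n) (Fin n) Rmin) (γ : ℝ)
    (k : Fin (d + 1)) (i j : Fin n) : Prop :=
  OptArc (AhatMat A γ) i j ∧ A k i j + ((((k : ℕ) : ℝ) * γ : ℝ) : Rmin) = AhatMat A γ i j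

/-- `(U, V)` is a Hungarian pair with respect to `B`. -/
def HungarianPair {n : ℕ} (B : Matrix (Fin n) (Fin n) Rmin) (U V : Fin n → ℝ) : Prop :=
  (∀ i j, ((U i + V j : ℝ) : Rmin) ≤ B i j) ∧
    (((∑ i, U i) + ∑ j, V j : ℝ) : Rmin) = mpPerm B

/-- `(i,j)` is an arc of the saturation graph `Sat(B,U,V)`. -/
def SatArc {n : ℕ} (B : Matrix (Fin n) (Fin n) Rmin) (U V : Fin n → ℝ) (i j : Fin n) : Prop :=
  B i j = ((U i + V j : ℝ) : Rmin)

/-- `(i,j)` is an arc of the digraph `Sat_k(γ, U, V)`. -/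
def SatK {n d : ℕ} (A : Fin (d + 1) → Matrix (Fin n) (Fin n) Rmin) (γ : ℝ)
    (U V : Fin n → ℝ) (k : Fin (d + 1)) (i j : Fin n) : Prop :=
  SatArc (AhatMat A γ) U V i j ∧
    A k i j + ((((k : ℕ) : ℝ) * γ : ℝ) : Rmin) = AhatMat A γ i j

open Classical in
/-- `b^G` : keep the entries of `b` on the arcs of the digraph `G`, set others to `0`. -/
def restrictG {n : ℕ} (b : Matrix (Fin n) (Fin n) ℂ) (G : Fin n → Fin n → Prop) :
    Matrix (Fin n) (Fin n) ℂ :=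
  fun i j => if G i j then b i j else 0

/-- The auxiliary pencil `a^{(γ)} = a_0^{G_0} + X a_1^{G_1} + ⋯ + X^d a_d^{G_d}`
built from digraphs `G_0, …, G_d`, as a matrix of polynomials in `ℂ[X]`. -/
def auxPencil {n d : ℕ} (a : Fin (d + 1) → Matrix (Fin n) (Fin n) ℂ)
    (G : Fin (d + 1) → Fin n → Fin n → Prop) : Matrix (Fin n) (Fin n) (Polynomial ℂ) :=
  fun i j => ∑ k : Fin (d + 1), Polynomial.C (restrictG (a k) (G k) i j) * X ^ (k : ℕ)

/-- The polynomial `det 𝒜_ε ∈ ℂ[X]` of the perturbed pencil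
`𝒜_ε = 𝒜_{ε,0} + X 𝒜_{ε,1} + ⋯ + X^d 𝒜_{ε,d}`, whose roots are the eigenvalues. -/
def pencilPoly {n d : ℕ} (𝒜 : ℝ → Fin (d + 1) → Matrix (Fin n) (Fin n) ℂ) (ε : ℝ) :
    Polynomial ℂ :=
  Matrix.det fun i j => ∑ k : Fin (d + 1), Polynomial.C (𝒜 ε k i j) * X ^ (k : ℕ)

/-- The perturbed pencil `𝒜_ε` has the asymptotics given by `(a_k, A_k)`:
`(𝒜_{ε,k})_{ij} = (a_k)_{ij} ε^{(A_k)_{ij}} + o(ε^{(A_k)_{ij}})` as `ε → 0⁺`,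
where `(A_k)_{ij} = +∞` means that the entry vanishes in a neighborhood of `0`. -/
def HasAsymptotics {n d : ℕ} (𝒜 : ℝ → Fin (d + 1) → Matrix (Fin n) (Fin n) ℂ)
    (a : Fin (d + 1) → Matrix (Fin n) (Fin n) ℂ)
    (A : Fin (d + 1) → Matrix (Fin n) (Fin n) Rmin) : Prop :=
  ∀ k i j,
    (A k i j = ⊤ → ∀ᶠ ε in 𝓝[>] (0 : ℝ), 𝒜 ε k i j = 0) ∧
    (∀ t : ℝ, A k i j = (t : Rmin) →
      (fun ε : ℝ => 𝒜 ε k i j - a k i j * ((ε ^ t : ℝ) : ℂ)) =o[𝓝[>] (0 : ℝ)]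
        fun ε : ℝ => (ε ^ t : ℝ))

/-!
Substitute `X = ε ^ γ * Y`. The `(i, j)` entry of the pencil then has order `ε ^ Â_{ij}(γ)`, so
every term of the expansion of `det 𝒜_ε` over permutations has order at least `ε ^ c`, where
`c = perm Â(γ)`. The terms of order exactly `ε ^ c` come from the optimal permutations. Conversely,
a permutation all of whose arcs lie on optimal permutations is itself optimal, by Birkhoff's
theorem, so restricting the leading coefficients to the arcs of `Opt_k(γ)` selects exactly these
terms, and `ε ^ (-c) det 𝒜_ε(ε ^ γ Y)` converges coefficientwise to `det a^{(γ)}`.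

Roots depend continuously on the coefficients even where the degree drops in the limit, as long as
it stays bounded by some `N`: if `p` has no root closer to `z` than `μ` is, then
`|p(μ)| ≤ 2 ^ N |p(z)|`, which fails for a point `μ` near a root `z` of the limit at which the limit
is nonzero. Dividing out one root at a time gives the multiplicities.
-/

section Birkhoff

open Matrix Equiv

variable {ι R : Type*} [Fintype ι]

lemma trace_permMatrix_mul_transpose [DecidableEq ι] [NonAssocSemiring R] (σ : Perm ι)
    (b : Matrix ι ι R) : (σ.permMatrix R * bᵀ).trace = ∑ i, b i (σ i) := by
  rw [Perm.permMatrix, PEquiv.toMatrix_toPEquiv_mul]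
  rfl

variable [Field R] [LinearOrder R] [IsStrictOrderedRing R]

lemma le_trace_mul_transpose_of_mem_doublyStochastic [DecidableEq ι] {M b : Matrix ι ι R} {c : R}
    (hM : M ∈ doublyStochastic R ι)
    (hc : ∀ ρ : Perm ι, (∀ i, M i (ρ i) ≠ 0) → c ≤ ∑ i, b i (ρ i)) :
    c ≤ (M * bᵀ).trace := by
  obtain ⟨w, hw_nonneg, hw_sum, hwM⟩ := exists_eq_sum_perm_of_mem_doublyStochastic hM
  have hsupp (ρ : Perm ι) (hρ : w ρ ≠ 0) (i : ι) : M i (ρ i) ≠ 0 := by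
    have hle : w ρ * ρ.permMatrix R i (ρ i) ≤ M i (ρ i) := by
      rw [← hwM, Matrix.sum_apply]
      exact single_le_sum (f := fun τ => (w τ • τ.permMatrix R) i (ρ i))
        (fun τ _ => mul_nonneg (hw_nonneg τ)
          (nonneg_of_mem_doublyStochastic permMatrix_mem_doublyStochastic)) (mem_univ ρ)
    have hpos : 0 < w ρ * ρ.permMatrix R i (ρ i) := by
      simpa using (hw_nonneg ρ).lt_of_ne' hρ
    exact (hpos.trans_le hle).ne'
  calc c = ∑ ρ, w ρ * c := by rw [← Finset.sum_mul, hw_sum, one_mul]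
    _ ≤ ∑ ρ, w ρ * ∑ i, b i (ρ i) := sum_le_sum fun ρ _ => by
        obtain h | h := eq_or_ne (w ρ) 0
        · simp [h]
        · exact mul_le_mul_of_nonneg_left (hc ρ (hsupp ρ h)) (hw_nonneg ρ)
    _ = (M * bᵀ).trace := by
        simp [← hwM, Finset.sum_mul, trace_sum, trace_permMatrix_mul_transpose]

lemma exists_mem_doublyStochastic_sum_permMatrix_add_sub_eq [DecidableEq ι] {σ : Perm ι}
    {τ : ι → Perm ι} (hτ : ∀ i, τ i i = σ i) (τ₀ : Perm ι) :
    ∃ D ∈ doublyStochastic R ι,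
      ∑ l, (τ l).permMatrix R + τ₀.permMatrix R - σ.permMatrix R = (Fintype.card ι : R) • D := by
  have hP (ρ : Perm ι) : ρ.permMatrix R ∈ doublyStochastic R ι := permMatrix_mem_doublyStochastic
  refine (exists_mem_doublyStochastic_eq_smul_iff (Nat.cast_nonneg _)).2
    ⟨fun i j => ?_, fun i => ?_, fun j => ?_⟩
  · have hσ : σ.permMatrix R i j = (τ i).permMatrix R i j := by simp [toPEquiv_apply, hτ]
    have hle : (τ i).permMatrix R i j ≤ ∑ l, (τ l).permMatrix R i j :=
      single_le_sum (f := fun l => (τ l).permMatrix R i j) (fun l _ => (hP (τ l)).1 i j)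
        (mem_univ i)
    rw [Matrix.sub_apply, Matrix.add_apply, Matrix.sum_apply, hσ]
    linarith [(hP τ₀).1 i j]
  · simp only [Matrix.sub_apply, Matrix.add_apply, Matrix.sum_apply, sum_sub_distrib,
      sum_add_distrib, sum_row_of_mem_doublyStochastic (hP _)]
    rw [Finset.sum_comm]
    simp only [sum_row_of_mem_doublyStochastic (hP _), sum_const, card_univ, nsmul_one,
      add_sub_cancel_right]
  · simp only [Matrix.sub_apply, Matrix.add_apply, Matrix.sum_apply, sum_sub_distrib,
      sum_add_distrib, sum_col_of_mem_doublyStochastic (hP _)]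
    rw [Finset.sum_comm]
    simp only [sum_col_of_mem_doublyStochastic (hP _), sum_const, card_univ, nsmul_one,
      add_sub_cancel_right]

/- Removing the arcs of `σ` from those of `τ₀` and of all the `τ i` leaves a nonnegative matrix with
constant row and column sums `card ι` and support in `F`. By Birkhoff's theorem it is a combination
of permutations supported by `F`, each of weight at least `c`. -/
lemma sum_le_of_forall_apply_eq {F : ι → ι → Prop} {b : Matrix ι ι R} {c : R}
    (hc : ∀ ρ : Perm ι, (∀ i, F i (ρ i)) → c ≤ ∑ i, b i (ρ i))
    {τ₀ : Perm ι} (hτ₀F : ∀ i, F i (τ₀ i)) (hτ₀c : ∑ i, b i (τ₀ i) = c)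
    {τ : ι → Perm ι} (hτF : ∀ l i, F i (τ l i)) (hτc : ∀ l, ∑ i, b i (τ l i) = c)
    {σ : Perm ι} (hτσ : ∀ i, τ i i = σ i) :
    ∑ i, b i (σ i) ≤ c := by
  classical
  obtain ⟨D, hD, hτD⟩ :=
    exists_mem_doublyStochastic_sum_permMatrix_add_sub_eq (R := R) hτσ τ₀
  have hDF {i j : ι} (hij : D i j ≠ 0) : F i j := by
    by_contra hF
    have hτ (l : ι) : τ l i ≠ j := fun h => hF (h ▸ hτF l i)
    have hτ₀ : τ₀ i ≠ j := fun h => hF (h ▸ hτ₀F i)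
    have hDij : (Fintype.card ι : R) * D i j = 0 := by
      rw [← smul_eq_mul, ← Matrix.smul_apply, ← hτD]
      simp [Matrix.sum_apply, toPEquiv_apply, hτ, hτ₀, ← hτσ]
    rw [mul_eq_zero, Nat.cast_eq_zero] at hDij
    exact hDij.elim (@Fintype.card_ne_zero ι _ ⟨i⟩) hij
  have hcD : c ≤ (D * bᵀ).trace :=
    le_trace_mul_transpose_of_mem_doublyStochastic hD fun ρ hρ => hc ρ fun i => hDF (hρ i)
  have htrace : Fintype.card ι * c + c - ∑ i, b i (σ i) = Fintype.card ι * (D * bᵀ).trace := by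
    rw [← smul_eq_mul _ (D * bᵀ).trace, ← trace_smul, ← Matrix.smul_mul, ← hτD]
    simp [Matrix.sub_mul, Matrix.add_mul, Finset.sum_mul, trace_sum,
      trace_permMatrix_mul_transpose, hτc, hτ₀c]
  have hcard := mul_le_mul_of_nonneg_left hcD (Nat.cast_nonneg (α := R) (Fintype.card ι))
  linarith

end Birkhoff

section OptimalAssignment

variable {n d : ℕ}

lemma coe_sum_untop₀_of_ne_top {ι R : Type*} [Fintype ι] [AddCommMonoid R] {f : ι → WithTop R}
    (hf : ∀ i, f i ≠ ⊤) : ((∑ i, (f i).untop₀ : R) : WithTop R) = ∑ i, f i := by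
  rw [WithTop.coe_sum]
  exact sum_congr rfl fun i _ => WithTop.coe_untop₀_of_ne_top (hf i)

lemma mpPerm_le (B : Matrix (Fin n) (Fin n) Rmin) (σ : Equiv.Perm (Fin n)) :
    mpPerm B ≤ ∑ i, B i (σ i) :=
  Finset.inf_le (f := fun σ : Equiv.Perm (Fin n) => ∑ i, B i (σ i)) (mem_univ σ)

lemma exists_sum_eq_mpPerm (B : Matrix (Fin n) (Fin n) Rmin) :
    ∃ σ : Equiv.Perm (Fin n), ∑ i, B i (σ i) = mpPerm B := by
  obtain ⟨σ, -, hσ⟩ := exists_mem_eq_inf univ univ_nonempty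
    fun σ : Equiv.Perm (Fin n) => ∑ i, B i (σ i)
  exact ⟨σ, hσ.symm⟩

lemma AhatMat_le (A : Fin (d + 1) → Matrix (Fin n) (Fin n) Rmin) (γ : ℝ) (k : Fin (d + 1))
    (i j : Fin n) : AhatMat A γ i j ≤ A k i j + ((((k : ℕ) : ℝ) * γ : ℝ) : Rmin) :=
  Finset.inf_le (f := fun k : Fin (d + 1) => A k i j + ((((k : ℕ) : ℝ) * γ : ℝ) : Rmin))
    (mem_univ k)

lemma sum_eq_mpPerm_of_forall_optArc {B : Matrix (Fin n) (Fin n) Rmin} (hB : mpPerm B ≠ ⊤)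
    {σ : Equiv.Perm (Fin n)} (hσ : ∀ i, OptArc B i (σ i)) :
    ∑ i, B i (σ i) = mpPerm B := by
  obtain ⟨c, hc⟩ := WithTop.ne_top_iff_exists.1 hB
  obtain ⟨τ₀, hτ₀⟩ := exists_sum_eq_mpPerm B
  choose τ hτσ hτ using hσ
  have hfin {ρ : Equiv.Perm (Fin n)} (hρ : ∑ i, B i (ρ i) = mpPerm B) (i : Fin n) :
      B i (ρ i) ≠ ⊤ :=
    WithTop.sum_ne_top.1 (hρ ▸ hB) i (mem_univ i)
  have hweight {ρ : Equiv.Perm (Fin n)} (hρ : ∑ i, B i (ρ i) = mpPerm B) :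
      ∑ i, (B i (ρ i)).untop₀ = c := by
    rw [← WithTop.coe_inj, coe_sum_untop₀_of_ne_top (hfin hρ), hρ, hc]
  refine le_antisymm ?_ (mpPerm_le B σ)
  rw [← coe_sum_untop₀_of_ne_top fun i => hτσ i ▸ hfin (hτ i) i, ← hc, WithTop.coe_le_coe]
  refine sum_le_of_forall_apply_eq (F := fun i j => B i j ≠ ⊤)
    (b := fun i j => (B i j).untop₀) (fun ρ hρ => ?_) (hfin hτ₀) (hweight hτ₀)
    (fun l => hfin (hτ l)) (fun l => hweight (hτ l)) hτσ
  rw [← WithTop.coe_le_coe, coe_sum_untop₀_of_ne_top hρ, hc]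
  exact mpPerm_le B ρ

lemma mpPerm_AhatMat_ne_top {A : Fin (d + 1) → Matrix (Fin n) (Fin n) Rmin} {m : ℕ}
    (hm : PAcoeff A m ≠ ⊤) (γ : ℝ) : mpPerm (AhatMat A γ) ≠ ⊤ := by
  simp only [PAcoeff, ne_eq, Finset.inf_eq_top_iff, not_forall] at hm
  obtain ⟨σ, -, κ, -, hκ⟩ := hm
  refine ne_top_of_le_ne_top ?_ (mpPerm_le _ σ)
  rw [WithTop.sum_eq_top] at hκ
  push Not at hκ
  refine WithTop.sum_ne_top.2 fun i hi => ne_top_of_le_ne_top ?_ (AhatMat_le A γ (κ i) i (σ i))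
  exact WithTop.add_ne_top.2 ⟨hκ i hi, WithTop.coe_ne_top⟩

end OptimalAssignment

section ContinuityOfRoots

/-- Coefficientwise convergence of a family of polynomials along a filter. No bound on the degrees
is built in, so that evaluation and roots behave well only under such a bound. -/
def TendstoCoeff {α R : Type*} [Semiring R] [TopologicalSpace R] (l : Filter α) (f : α → R[X])
    (g : R[X]) : Prop :=
  ∀ k, Tendsto (fun x => (f x).coeff k) l (𝓝 (g.coeff k))

lemma coeff_divByMonic_X_sub_C_of_natDegree_le {R : Type*} [Ring R] {p : R[X]} {N : ℕ}
    (hp : p.natDegree ≤ N) (a : R) (k : ℕ) :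
    (p /ₘ (X - C a)).coeff k = ∑ i ∈ Icc (k + 1) N, a ^ (i - (k + 1)) * p.coeff i := by
  rw [coeff_divByMonic_X_sub_C]
  refine sum_subset (Icc_subset_Icc_right hp) fun i hi hi' => ?_
  rw [coeff_eq_zero_of_natDegree_lt, mul_zero]
  simp only [Finset.mem_Icc] at hi hi'
  lia

namespace TendstoCoeff

variable {α ι R : Type*} {l : Filter α}

section Semiring

variable [Semiring R] [TopologicalSpace R] {f f' : α → R[X]} {g g' : R[X]}

lemma congr' (h : TendstoCoeff l f g) (hff : f =ᶠ[l] f') : TendstoCoeff l f' g := fun k =>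
  (h k).congr' (hff.mono fun _ hx => by rw [hx])

lemma const (g : R[X]) : TendstoCoeff l (fun _ => g) g := fun _ => tendsto_const_nhds

lemma C {f : α → R} {c : R} (h : Tendsto f l (𝓝 c)) :
    TendstoCoeff l (fun x => Polynomial.C (f x)) (Polynomial.C c) := fun k => by
  simp only [coeff_C]
  split_ifs
  exacts [h, tendsto_const_nhds]

lemma mul [IsTopologicalSemiring R] (h : TendstoCoeff l f g) (h' : TendstoCoeff l f' g') :
    TendstoCoeff l (fun x => f x * f' x) (g * g') := fun k => by
  simp only [coeff_mul]
  exact tendsto_finsetSum _ fun p _ => (h p.1).mul (h' p.2)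

lemma smul {M : Type*} [TopologicalSpace M] [SMulZeroClass M R] [ContinuousSMul M R] {c : α → M}
    {c₀ : M} (h : TendstoCoeff l f g) (hc : Tendsto c l (𝓝 c₀)) :
    TendstoCoeff l (fun x => c x • f x) (c₀ • g) := fun k => by
  simp only [coeff_smul]
  exact hc.smul (h k)

lemma sum [ContinuousAdd R] {s : Finset ι} {f : ι → α → R[X]} {g : ι → R[X]}
    (h : ∀ i ∈ s, TendstoCoeff l (f i) (g i)) :
    TendstoCoeff l (fun x => ∑ i ∈ s, f i x) (∑ i ∈ s, g i) := fun k => by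
  simp only [finsetSum_coeff]
  exact tendsto_finsetSum _ fun i hi => h i hi k

lemma eval [IsTopologicalSemiring R] {N : ℕ} (h : TendstoCoeff l f g)
    (hf : ∀ x, (f x).natDegree ≤ N) (z : R) :
    Tendsto (fun x => (f x).eval z) l (𝓝 (g.eval z)) := by
  have heval {p : R[X]} (hp : p.natDegree ≤ max N g.natDegree) :=
    eval_eq_sum_range' (Nat.lt_succ_of_le hp) z
  rw [heval (le_max_right _ _)]
  simp only [fun x => heval ((hf x).trans (le_max_left _ _))]
  exact tendsto_finsetSum _ fun i _ => (h i).mul_const _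

end Semiring

lemma divByMonic [Ring R] [TopologicalSpace R] [IsTopologicalSemiring R] {f : α → R[X]}
    {g : R[X]} {N : ℕ} (h : TendstoCoeff l f g) (hf : ∀ x, (f x).natDegree ≤ N)
    {L : α → R} {z : R} (hL : Tendsto L l (𝓝 z)) :
    TendstoCoeff l (fun x => f x /ₘ (X - Polynomial.C (L x))) (g /ₘ (X - Polynomial.C z)) :=
  fun k => by
    rw [coeff_divByMonic_X_sub_C_of_natDegree_le (le_max_right N _)]
    simp only [fun x =>
      coeff_divByMonic_X_sub_C_of_natDegree_le ((hf x).trans (le_max_left N g.natDegree))]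
    exact tendsto_finsetSum _ fun i _ => (hL.pow _).mul (h i)

end TendstoCoeff

lemma norm_eval_le_two_pow_mul_norm_eval {K : Type*} [NormedField K] {p : K[X]} (hp : p.Splits)
    {z μ : K} (h : ∀ r ∈ p.roots, ‖μ - z‖ ≤ ‖r - z‖) :
    ‖p.eval μ‖ ≤ 2 ^ p.natDegree * ‖p.eval z‖ := by
  have hfactor {r : K} (hr : ‖μ - z‖ ≤ ‖r - z‖) : ‖μ - r‖ ≤ 2 * ‖z - r‖ := by
    rw [norm_sub_rev r z] at hr
    linarith [norm_sub_le_norm_sub_add_norm_sub μ z r]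
  have hprod (s : Multiset K) (hs : ∀ r ∈ s, ‖μ - z‖ ≤ ‖r - z‖) :
      ‖(s.map (μ - ·)).prod‖ ≤ 2 ^ s.card * ‖(s.map (z - ·)).prod‖ := by
    induction s using Multiset.induction_on with
    | empty => simp
    | cons r s ih =>
      obtain ⟨hr, hs⟩ := Multiset.forall_mem_cons.1 hs
      simp only [Multiset.map_cons, Multiset.prod_cons, norm_mul, Multiset.card_cons]
      calc ‖μ - r‖ * ‖(s.map (μ - ·)).prod‖
          ≤ (2 * ‖z - r‖) * (2 ^ s.card * ‖(s.map (z - ·)).prod‖) := by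
            gcongr
            exacts [hfactor hr, ih hs]
        _ = 2 ^ (s.card + 1) * (‖z - r‖ * ‖(s.map (z - ·)).prod‖) := by ring
  rw [hp.eval_eq_prod_roots, hp.eval_eq_prod_roots, hp.natDegree_eq_card_roots, norm_mul, norm_mul,
    mul_left_comm]
  gcongr
  exact hprod p.roots h

lemma exists_tendsto_of_forall_eventually_exists_dist_lt {α E : Type*} [PseudoMetricSpace E]
    {l : Filter α} {S : α → Finset E} {z : E}
    (h : ∀ δ > 0, ∀ᶠ x in l, ∃ r ∈ S x, dist r z < δ) :
    ∃ L : α → E, (∀ᶠ x in l, L x ∈ S x) ∧ Tendsto L l (𝓝 z) := by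
  have hmin (x : α) : ∃ y, (S x).Nonempty → y ∈ S x ∧ ∀ r ∈ S x, dist y z ≤ dist r z := by
    by_cases hS : (S x).Nonempty
    · obtain ⟨y, hy⟩ := (S x).exists_min_image (dist · z) hS
      exact ⟨y, fun _ => hy⟩
    · exact ⟨z, fun hS' => absurd hS' hS⟩
  choose L hL using hmin
  refine ⟨L, ?_, Metric.tendsto_nhds.2 fun δ hδ => ?_⟩
  · filter_upwards [h 1 one_pos] with x ⟨r, hr, _⟩
    exact (hL x ⟨r, hr⟩).1
  · filter_upwards [h δ hδ] with x ⟨r, hr, hrδ⟩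
    exact ((hL x ⟨r, hr⟩).2 r hr).trans_lt hrδ

lemma roots_eq_cons_roots_divByMonic {R : Type*} [CommRing R] [IsDomain R] {p : R[X]} {a : R}
    (ha : a ∈ p.roots) : p.roots = a ::ₘ (p /ₘ (X - C a)).roots := by
  have hp : (X - C a) * (p /ₘ (X - C a)) = p :=
    mul_divByMonic_eq_iff_isRoot.2 (isRoot_of_mem_roots ha)
  conv_lhs => rw [← hp]
  rw [roots_mul (hp.symm ▸ ne_zero_of_mem_roots ha), roots_X_sub_C, Multiset.singleton_add]

lemma natDegree_divByMonic_le {R : Type*} [Ring R] (p q : R[X]) :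
    (p /ₘ q).natDegree ≤ p.natDegree := natDegree_le_natDegree (degree_divByMonic_le p q)

namespace TendstoCoeff

variable {α K : Type*} [NontriviallyNormedField K] [IsAlgClosed K] {l : Filter α}
  {f : α → K[X]} {g : K[X]} {N : ℕ}

lemma exists_tendsto_root (h : TendstoCoeff l f g) (hf : ∀ x, (f x).natDegree ≤ N) {z : K}
    (hz : z ∈ g.roots) :
    ∃ L : α → K, (∀ᶠ x in l, L x ∈ (f x).roots) ∧ Tendsto L l (𝓝 z) := by
  classical
  obtain ⟨hg, hgz⟩ := mem_roots'.1 hz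
  suffices hnear : ∀ δ > 0, ∀ᶠ x in l, ∃ r ∈ (f x).roots.toFinset, dist r z < δ by
    simpa only [Multiset.mem_toFinset] using
      exists_tendsto_of_forall_eventually_exists_dist_lt hnear
  intro δ hδ
  obtain ⟨μ, hμδ, hμ⟩ : ∃ μ ∈ Metric.ball z δ, g.eval μ ≠ 0 := by
    by_contra! hball
    exact hg (g.eq_zero_of_infinite_isRoot
      ((infinite_of_mem_nhds z (Metric.ball_mem_nhds z hδ)).mono hball))
  have hlim_z : Tendsto (fun x => 2 ^ N * ‖(f x).eval z‖) l (𝓝 0) := by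
    simpa [hgz.eq_zero] using (h.eval hf z).norm.const_mul (2 ^ N)
  filter_upwards [hlim_z.eventually_lt (h.eval hf μ).norm (norm_pos_iff.2 hμ)] with x hx
  by_contra! hfar
  have hroots : ∀ r ∈ (f x).roots, ‖μ - z‖ ≤ ‖r - z‖ := fun r hr => by
    rw [← dist_eq_norm, ← dist_eq_norm]
    exact (Metric.mem_ball.1 hμδ).le.trans (hfar r (Multiset.mem_toFinset.2 hr))
  refine hx.not_ge ?_
  calc ‖(f x).eval μ‖
      ≤ 2 ^ (f x).natDegree * ‖(f x).eval z‖ :=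
        norm_eval_le_two_pow_mul_norm_eval (IsAlgClosed.splits (f x)) hroots
    _ ≤ 2 ^ N * ‖(f x).eval z‖ := by
        gcongr
        exacts [one_le_two, hf x]

lemma exists_tendsto_roots (h : TendstoCoeff l f g) (hf : ∀ x, (f x).natDegree ≤ N) {m : ℕ}
    {lam : Fin m → K} (hlam : Multiset.map lam univ.val ≤ g.roots) :
    ∃ L : Fin m → α → K, (∀ᶠ x in l, Multiset.map (fun i => L i x) univ.val ≤ (f x).roots) ∧
      ∀ i, Tendsto (L i) l (𝓝 (lam i)) := by
  induction m generalizing f g with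
  | zero => exact ⟨fun i => i.elim0, by simp, fun i => i.elim0⟩
  | succ m ih =>
    have hcons (v : Fin (m + 1) → K) :
        Multiset.map v univ.val = v 0 ::ₘ Multiset.map (fun i : Fin m => v i.succ) univ.val := by
      simp [Fin.univ_succ, Function.comp_def]
    rw [hcons] at hlam
    have hroot : lam 0 ∈ g.roots := Multiset.mem_of_le hlam (Multiset.mem_cons_self _ _)
    obtain ⟨L₀, hL₀, hL₀lim⟩ := h.exists_tendsto_root hf hroot
    rw [roots_eq_cons_roots_divByMonic hroot, Multiset.cons_le_cons_iff] at hlam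
    obtain ⟨L, hL, hLlim⟩ := ih (h.divByMonic hf hL₀lim)
      (fun x => (natDegree_divByMonic_le _ _).trans (hf x)) hlam
    refine ⟨Fin.cons L₀ L, ?_, Fin.cases hL₀lim hLlim⟩
    filter_upwards [hL₀, hL] with x hx₀ hx
    rw [hcons, roots_eq_cons_roots_divByMonic hx₀]
    exact (Multiset.cons_le_cons_iff _).2 hx

end TendstoCoeff

end ContinuityOfRoots

section LeadingTerm

/-- The family `f` has order `ε ^ v` with leading coefficient `p` as `ε → 0⁺`, coefficientwise:
`f ε = ε ^ v (p + o(1))`. As in `HasAsymptotics`, order `v = ⊤` means that `f ε` vanishes near `0`,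
and `p` is then arbitrary; `p = 0` is allowed for finite `v`, so `v` is only a lower bound for the
actual order. -/
def HasLeadingTerm {R : Type*} [Semiring R] [SMulZeroClass ℝ R] [TopologicalSpace R]
    (f : ℝ → R[X]) (v : Rmin) (p : R[X]) : Prop :=
  (v = ⊤ → ∀ᶠ ε in 𝓝[>] 0, f ε = 0) ∧
    ∀ t : ℝ, v = t → TendstoCoeff (𝓝[>] 0) (fun ε => ε ^ (-t) • f ε) p

lemma tendsto_rpow_nhdsGT_zero {s : ℝ} (hs : 0 < s) :
    Tendsto (fun ε : ℝ => ε ^ s) (𝓝[>] 0) (𝓝 0) := by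
  have hcont : ContinuousAt (fun ε : ℝ => ε ^ s) 0 := Real.continuousAt_rpow_const _ _ (.inr hs.le)
  simpa only [Real.zero_rpow hs.ne'] using hcont.tendsto.mono_left nhdsWithin_le_nhds

lemma rpow_neg_smul_rpow_smul {M : Type*} [MulAction ℝ M] {ε : ℝ} (hε : 0 < ε) (t : ℝ) (x : M) :
    ε ^ (-t) • ε ^ t • x = x := by
  rw [smul_smul, ← Real.rpow_add hε, neg_add_cancel, Real.rpow_zero, one_smul]

section Semiring

variable {R : Type*} [Semiring R] [TopologicalSpace R] {f : ℝ → R[X]} {v : Rmin} {p : R[X]}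

lemma hasLeadingTerm_top_iff [SMulZeroClass ℝ R] :
    HasLeadingTerm f ⊤ p ↔ ∀ᶠ ε in 𝓝[>] 0, f ε = 0 := by
  simp [HasLeadingTerm]

lemma hasLeadingTerm_coe_iff [SMulZeroClass ℝ R] {t : ℝ} :
    HasLeadingTerm f t p ↔ TendstoCoeff (𝓝[>] 0) (fun ε => ε ^ (-t) • f ε) p := by
  simp [HasLeadingTerm]

namespace HasLeadingTerm

lemma const [Module ℝ R] (p : R[X]) : HasLeadingTerm (fun _ => p) 0 p := by
  rw [← WithTop.coe_zero, hasLeadingTerm_coe_iff]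
  simpa only [neg_zero, Real.rpow_zero, one_smul] using TendstoCoeff.const p

lemma sum [Module ℝ R] [ContinuousAdd R] {ι : Type*} {s : Finset ι} {f : ι → ℝ → R[X]}
    {p : ι → R[X]} (h : ∀ i ∈ s, HasLeadingTerm (f i) v (p i)) :
    HasLeadingTerm (fun ε => ∑ i ∈ s, f i ε) v (∑ i ∈ s, p i) := by
  refine ⟨fun hv => ?_, fun t ht => ?_⟩
  · filter_upwards [(eventually_all_finset s).2 fun i hi => (h i hi).1 hv] with ε hε
    exact sum_eq_zero hε
  · simp only [smul_sum]
    exact TendstoCoeff.sum fun i hi => (h i hi).2 t ht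

lemma of_lt [Module ℝ R] [ContinuousSMul ℝ R] {c : Rmin} (h : HasLeadingTerm f v p)
    (hc : c < v) : HasLeadingTerm f c 0 := by
  lift c to ℝ using hc.ne_top
  rw [hasLeadingTerm_coe_iff]
  induction v using WithTop.recTopCoe with
  | top =>
    refine (TendstoCoeff.const 0).congr' ?_
    filter_upwards [hasLeadingTerm_top_iff.1 h] with ε hε
    rw [hε, smul_zero]
  | coe t =>
    have hlim := (hasLeadingTerm_coe_iff.1 h).smul
      (tendsto_rpow_nhdsGT_zero (sub_pos.2 (WithTop.coe_lt_coe.1 hc)))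
    rw [zero_smul] at hlim
    refine hlim.congr' ?_
    filter_upwards [self_mem_nhdsWithin] with ε (hε : 0 < ε)
    rw [smul_smul, ← Real.rpow_add hε]
    congr 2
    ring

lemma mul [Algebra ℝ R] [IsTopologicalSemiring R] {f' : ℝ → R[X]} {v' : Rmin} {p' : R[X]}
    (h : HasLeadingTerm f v p) (h' : HasLeadingTerm f' v' p') :
    HasLeadingTerm (fun ε => f ε * f' ε) (v + v') (p * p') := by
  induction v using WithTop.recTopCoe with
  | top =>
    rw [WithTop.top_add, hasLeadingTerm_top_iff]
    filter_upwards [hasLeadingTerm_top_iff.1 h] with ε hε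
    rw [hε, zero_mul]
  | coe t =>
    induction v' using WithTop.recTopCoe with
    | top =>
      rw [WithTop.add_top, hasLeadingTerm_top_iff]
      filter_upwards [hasLeadingTerm_top_iff.1 h'] with ε hε
      rw [hε, mul_zero]
    | coe t' =>
      rw [← WithTop.coe_add, hasLeadingTerm_coe_iff]
      refine ((hasLeadingTerm_coe_iff.1 h).mul (hasLeadingTerm_coe_iff.1 h')).congr' ?_
      filter_upwards [self_mem_nhdsWithin] with ε (hε : 0 < ε)
      rw [smul_mul_smul_comm, ← Real.rpow_add hε, neg_add]

end HasLeadingTerm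

lemma hasLeadingTerm_rpow_smul_X_pow {R : Type*} [Semiring R] [Algebra ℝ R] [TopologicalSpace R]
    (γ : ℝ) (k : ℕ) :
    HasLeadingTerm (fun ε => (ε ^ γ • X : R[X]) ^ k) ((k * γ : ℝ) : Rmin) (X ^ k) := by
  refine hasLeadingTerm_coe_iff.2 ((TendstoCoeff.const (X ^ k)).congr' ?_)
  filter_upwards [self_mem_nhdsWithin] with ε (hε : 0 < ε)
  rw [_root_.smul_pow, ← Real.rpow_mul_natCast hε.le, mul_comm γ, rpow_neg_smul_rpow_smul hε]

end Semiring

lemma HasLeadingTerm.prod {R ι : Type*} [CommSemiring R] [Algebra ℝ R] [TopologicalSpace R]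
    [IsTopologicalSemiring R] {s : Finset ι} {f : ι → ℝ → R[X]} {v : ι → Rmin} {p : ι → R[X]}
    (h : ∀ i ∈ s, HasLeadingTerm (f i) (v i) (p i)) :
    HasLeadingTerm (fun ε => ∏ i ∈ s, f i ε) (∑ i ∈ s, v i) (∏ i ∈ s, p i) := by
  classical
  induction s using Finset.induction_on with
  | empty => simpa using const 1
  | insert i s hi ih =>
    obtain ⟨hi', hs⟩ := forall_mem_insert .. |>.1 h
    simp only [prod_insert hi, sum_insert hi]
    exact hi'.mul (ih hs)

section Roots

variable {F R : Type*} [Field F] [CommRing R] [IsDomain R] [Algebra F R] {c : F}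

lemma roots_smul_of_ne_zero (hc : c ≠ 0) (p : R[X]) : (c • p).roots = p.roots := by
  rw [← algebraMap_smul R, roots_smul_nonzero]
  simpa using hc

lemma map_smul_roots_comp_smul_X (hc : c ≠ 0) (p : R[X]) :
    (p.comp (c • X)).roots.map (c • ·) = p.roots := by
  have hc' : IsUnit (algebraMap F R c) := hc.isUnit.map _
  simpa [Algebra.smul_def] using map_roots_comp_C_mul_X_add_C p (algebraMap F R c) 0 hc'

end Roots

lemma HasLeadingTerm.exists_tendsto_roots {K : Type*} [NontriviallyNormedField K] [IsAlgClosed K]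
    [Algebra ℝ K] {f : ℝ → K[X]} {N : ℕ} (hf : ∀ ε, (f ε).natDegree ≤ N) {γ : ℝ} {v : Rmin}
    (hv : v ≠ ⊤) {p : K[X]} (h : HasLeadingTerm (fun ε => (f ε).comp (ε ^ γ • X)) v p) {m : ℕ}
    {lam : Fin m → K} (hlam : Multiset.map lam univ.val ≤ p.roots) :
    ∃ ε₀ > (0 : ℝ), ∃ L : Fin m → ℝ → K,
      (∀ ε ∈ Set.Ioo (0 : ℝ) ε₀, Multiset.map (fun i => L i ε) univ.val ≤ (f ε).roots) ∧
      ∀ i, Tendsto (fun ε : ℝ => ε ^ (-γ) • L i ε) (𝓝[>] 0) (𝓝 (lam i)) := by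
  lift v to ℝ using hv
  have hdeg (ε : ℝ) : (ε ^ (-v) • (f ε).comp (ε ^ γ • X)).natDegree ≤ N :=
    calc (ε ^ (-v) • (f ε).comp (ε ^ γ • X)).natDegree
        ≤ (f ε).natDegree * (ε ^ γ • X : K[X]).natDegree :=
          (natDegree_smul_le _ _).trans natDegree_comp_le
      _ ≤ N * 1 := Nat.mul_le_mul (hf ε) ((natDegree_smul_le _ _).trans natDegree_X_le)
      _ = N := mul_one N
  obtain ⟨M, hM, hMlim⟩ := (hasLeadingTerm_coe_iff.1 h).exists_tendsto_roots hdeg hlam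
  obtain ⟨ε₀, hε₀, hsub⟩ := mem_nhdsGT_iff_exists_Ioo_subset.1 hM
  refine ⟨ε₀, hε₀, fun i ε => ε ^ γ • M i ε, fun ε hε => ?_, fun i => ?_⟩
  · have hpow (s : ℝ) : ε ^ s ≠ 0 := (Real.rpow_pos_of_pos hε.1 s).ne'
    have hle : Multiset.map (fun i => M i ε) univ.val ≤
        (ε ^ (-v) • (f ε).comp (ε ^ γ • X)).roots := hsub hε
    replace hle := Multiset.map_le_map (f := (ε ^ γ • ·)) hle
    rwa [roots_smul_of_ne_zero (hpow _), map_smul_roots_comp_smul_X (hpow _),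
      Multiset.map_map] at hle
  · refine (hMlim i).congr' ?_
    filter_upwards [self_mem_nhdsWithin] with ε (hε : 0 < ε)
    rw [rpow_neg_smul_rpow_smul hε]

end LeadingTerm

section Determinant

variable {ι R : Type*} [Fintype ι] [DecidableEq ι] [CommRing R]

lemma natDegree_det_le {d : ℕ} {M : Matrix ι ι R[X]} (hM : ∀ i j, (M i j).natDegree ≤ d) :
    M.det.natDegree ≤ Fintype.card ι * d := by
  rw [Matrix.det_apply]
  refine natDegree_sum_le_of_forall_le _ _ fun σ _ => ?_
  calc (σ.sign • ∏ i, M (σ i) i).natDegree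
      ≤ ∑ i, (M (σ i) i).natDegree := (natDegree_smul_le _ _).trans (natDegree_prod_le _ _)
    _ ≤ Fintype.card ι * d := by
        simpa using sum_le_card_nsmul univ _ d fun i _ => hM (σ i) i

lemma det_eq_sum_sign_mul_prod (M : Matrix ι ι R) :
    M.det = ∑ σ : Equiv.Perm ι, (σ.sign : R) * ∏ i, M i (σ i) := by
  rw [← Matrix.det_transpose, Matrix.det_apply']
  rfl

end Determinant

section PerturbedPencil

variable {n d : ℕ}

lemma natDegree_pencilPoly_le (𝒜 : ℝ → Fin (d + 1) → Matrix (Fin n) (Fin n) ℂ) (ε : ℝ) :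
    (pencilPoly 𝒜 ε).natDegree ≤ n * d := by
  refine (natDegree_det_le fun i j => ?_).trans_eq (by rw [Fintype.card_fin])
  exact natDegree_sum_le_of_forall_le _ _ fun k _ =>
    (natDegree_C_mul_X_pow_le _ _).trans (Nat.lt_succ_iff.1 k.2)

lemma pencilPoly_comp (𝒜 : ℝ → Fin (d + 1) → Matrix (Fin n) (Fin n) ℂ) (ε : ℝ) (q : ℂ[X]) :
    (pencilPoly 𝒜 ε).comp q = ∑ σ : Equiv.Perm (Fin n),
      (σ.sign : ℂ[X]) * ∏ i, ∑ k : Fin (d + 1), C (𝒜 ε k i (σ i)) * q ^ (k : ℕ) := by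
  refine (congrArg (Polynomial.comp · q) (det_eq_sum_sign_mul_prod _)).trans ?_
  simp [Polynomial.prod_comp]

variable {𝒜 : ℝ → Fin (d + 1) → Matrix (Fin n) (Fin n) ℂ}
  {a : Fin (d + 1) → Matrix (Fin n) (Fin n) ℂ} {A : Fin (d + 1) → Matrix (Fin n) (Fin n) Rmin}

/-- The digraph of the arcs `(i, j)` for which the exponent `k` attains the minimum defining
`Â_{ij}(γ)`; `OptK A γ k` is its intersection with `OptArc (AhatMat A γ)`. -/
def TightArc (A : Fin (d + 1) → Matrix (Fin n) (Fin n) Rmin) (γ : ℝ) (k : Fin (d + 1))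
    (i j : Fin n) : Prop :=
  A k i j + ((((k : ℕ) : ℝ) * γ : ℝ) : Rmin) = AhatMat A γ i j

lemma optK_iff {γ : ℝ} {k : Fin (d + 1)} {i j : Fin n} :
    OptK A γ k i j ↔ OptArc (AhatMat A γ) i j ∧ TightArc A γ k i j := Iff.rfl

open Classical in
lemma auxPencil_optK_apply (a : Fin (d + 1) → Matrix (Fin n) (Fin n) ℂ)
    (A : Fin (d + 1) → Matrix (Fin n) (Fin n) Rmin) (γ : ℝ) (i j : Fin n) :
    auxPencil a (OptK A γ) i j =
      if OptArc (AhatMat A γ) i j then auxPencil a (TightArc A γ) i j else 0 := by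
  split_ifs with h <;> simp [auxPencil, restrictG, optK_iff, h]

lemma prod_auxPencil_optK_of_eq {γ : ℝ} {σ : Equiv.Perm (Fin n)}
    (hσ : ∑ i, AhatMat A γ i (σ i) = mpPerm (AhatMat A γ)) :
    ∏ i, auxPencil a (OptK A γ) i (σ i) = ∏ i, auxPencil a (TightArc A γ) i (σ i) :=
  prod_congr rfl fun i _ => by rw [auxPencil_optK_apply, if_pos ⟨σ, rfl, hσ⟩]

lemma prod_auxPencil_optK_of_ne {γ : ℝ} (hA : mpPerm (AhatMat A γ) ≠ ⊤) {σ : Equiv.Perm (Fin n)}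
    (hσ : ∑ i, AhatMat A γ i (σ i) ≠ mpPerm (AhatMat A γ)) :
    ∏ i, auxPencil a (OptK A γ) i (σ i) = 0 := by
  obtain ⟨i, hi⟩ : ∃ i, ¬ OptArc (AhatMat A γ) i (σ i) := by
    by_contra! hopt
    exact hσ (sum_eq_mpPerm_of_forall_optArc hA hopt)
  exact prod_eq_zero (mem_univ i) (by rw [auxPencil_optK_apply, if_neg hi])

namespace HasAsymptotics

lemma hasLeadingTerm_C (h : HasAsymptotics 𝒜 a A) (k : Fin (d + 1)) (i j : Fin n) :
    HasLeadingTerm (fun ε => C (𝒜 ε k i j)) (A k i j) (C (a k i j)) := by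
  obtain ⟨htop, hcoe⟩ := h k i j
  refine ⟨fun hA => (htop hA).mono fun ε hε => by simp only [hε, C_0], fun t ht => ?_⟩
  have hlim := ((Complex.isLittleO_ofReal_right.2 (hcoe t ht)).tendsto_div_nhds_zero).add_const
    (a k i j)
  rw [zero_add] at hlim
  refine (TendstoCoeff.C hlim).congr' ?_
  filter_upwards [self_mem_nhdsWithin] with ε (hε : 0 < ε)
  have hpow : ((ε ^ t : ℝ) : ℂ) ≠ 0 := by exact_mod_cast (Real.rpow_pos_of_pos hε t).ne'
  rw [smul_C, Complex.real_smul, Real.rpow_neg hε.le]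
  congr 1
  push_cast
  field_simp
  ring

lemma hasLeadingTerm_entry (h : HasAsymptotics 𝒜 a A) (γ : ℝ) (i j : Fin n) :
    HasLeadingTerm (fun ε => ∑ k : Fin (d + 1), C (𝒜 ε k i j) * (ε ^ γ • X) ^ (k : ℕ))
      (AhatMat A γ i j) (auxPencil a (TightArc A γ) i j) := by
  refine HasLeadingTerm.sum fun k _ => ?_
  have hk := (h.hasLeadingTerm_C k i j).mul (hasLeadingTerm_rpow_smul_X_pow γ k)
  obtain heq | hlt := (AhatMat_le A γ k i j).eq_or_lt
  · rwa [restrictG, if_pos (show TightArc A γ k i j from heq.symm), heq]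
  · rw [restrictG, if_neg (show ¬TightArc A γ k i j from hlt.ne'), C_0, zero_mul]
    exact hk.of_lt hlt

lemma hasLeadingTerm_pencilPoly_comp (h : HasAsymptotics 𝒜 a A) {γ : ℝ}
    (hA : mpPerm (AhatMat A γ) ≠ ⊤) :
    HasLeadingTerm (fun ε => (pencilPoly 𝒜 ε).comp (ε ^ γ • X)) (mpPerm (AhatMat A γ))
      (auxPencil a (OptK A γ)).det := by
  simp only [pencilPoly_comp, det_eq_sum_sign_mul_prod]
  refine HasLeadingTerm.sum fun σ _ => ?_
  rw [← zero_add (mpPerm _)]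
  refine (HasLeadingTerm.const _).mul ?_
  have hprod := HasLeadingTerm.prod (s := univ) fun i _ => h.hasLeadingTerm_entry γ i (σ i)
  obtain heq | hlt := (mpPerm_le (AhatMat A γ) σ).eq_or_lt
  · rwa [prod_auxPencil_optK_of_eq heq.symm, heq]
  · rw [prod_auxPencil_optK_of_ne hA hlt.ne']
    exact hprod.of_lt hlt

end HasAsymptotics

end PerturbedPencil

theorem mainTheorem_opt_part_general {n d : ℕ}
    {𝒜 : ℝ → Fin (d + 1) → Matrix (Fin n) (Fin n) ℂ}
    {a : Fin (d + 1) → Matrix (Fin n) (Fin n) ℂ}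
    {A : Fin (d + 1) → Matrix (Fin n) (Fin n) Rmin} (hasym : HasAsymptotics 𝒜 a A)
    (hA : ∃ k, PAcoeff A k ≠ ⊤) (γ : ℝ) {m : ℕ} {lam : Fin m → ℂ}
    (hlam : Multiset.map lam univ.val ≤ (auxPencil a (OptK A γ)).det.roots) :
    ∃ ε₀ > (0 : ℝ), ∃ L : Fin m → ℝ → ℂ,
      (∀ ε ∈ Set.Ioo (0 : ℝ) ε₀,
        Multiset.map (fun i => L i ε) univ.val ≤ (pencilPoly 𝒜 ε).roots) ∧
      ∀ i, Tendsto (fun ε : ℝ => ((ε ^ (-γ) : ℝ) : ℂ) * L i ε) (𝓝[>] (0 : ℝ)) (𝓝 (lam i)) := by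
  obtain ⟨k, hk⟩ := hA
  have hperm : mpPerm (AhatMat A γ) ≠ ⊤ := mpPerm_AhatMat_ne_top hk γ
  exact (hasym.hasLeadingTerm_pencilPoly_comp hperm).exists_tendsto_roots
    (natDegree_pencilPoly_le 𝒜) hperm hlam

/-- **Theorem 1 (first part, with `G_k = Opt_k(γ)`).**
Let `γ ∈ ℝ` be a finite corner of the min-plus characteristic polynomial `P_A` and let
`a^{(γ)}` be the auxiliary pencil built with the graphs `G_k = Opt_k(γ)`.  If
`det a^{(γ)} ∈ ℂ[X]` has nonzero roots `λ_1, …, λ_m` (with multiplicity), then there are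
`ε₀ > 0` and functions `L_1, …, L_m : (0, ε₀) → ℂ` such that for every `ε ∈ (0, ε₀)` the
multiset `{L_1 ε, …, L_m ε}` is a sub-multiset of the roots of `det 𝒜_ε` (with
multiplicity), and `ε^{-γ} L_i ε → λ_i` as `ε → 0⁺`; i.e. `𝒜_ε` has `m` eigenvalues with
asymptotic equivalents `λ_i ε^γ`. -/
theorem mainTheorem_opt_part
    (n d : ℕ) (hn : 1 ≤ n)
    (𝒜 : ℝ → Fin (d + 1) → Matrix (Fin n) (Fin n) ℂ)
    (a : Fin (d + 1) → Matrix (Fin n) (Fin n) ℂ)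
    (A : Fin (d + 1) → Matrix (Fin n) (Fin n) Rmin)
    (hcont : ∀ k i j, ContinuousOn (fun ε : ℝ => 𝒜 ε k i j) (Set.Ioi 0))
    (hasym : HasAsymptotics 𝒜 a A)
    (γ : ℝ) (hγ : IsFiniteCorner A γ)
    (m : ℕ) (lam : Fin m → ℂ)
    (hlam : ((auxPencil a (OptK A γ)).det.roots.filter (· ≠ 0)) =
      Multiset.map lam Finset.univ.val) :
    ∃ ε₀ > (0 : ℝ), ∃ L : Fin m → ℝ → ℂ,
      (∀ ε ∈ Set.Ioo (0 : ℝ) ε₀,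
        Multiset.map (fun i => L i ε) Finset.univ.val ≤ (pencilPoly 𝒜 ε).roots) ∧
      ∀ i, Tendsto (fun ε : ℝ => ((ε ^ (-γ) : ℝ) : ℂ) * L i ε) (𝓝[>] (0 : ℝ))
        (𝓝 (lam i)) := by
  obtain ⟨k, hk, -⟩ := hγ
  exact mainTheorem_opt_part_general hasym ⟨k, (Finset.mem_filter.1 hk).2.1⟩ γ
    (hlam ▸ Multiset.filter_le _ _)
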